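/- Let A generate an α-times resolvent family {S_α(t)}_{t≥0} on X, where 1 < α < 2, let r > 0, and suppose S_α(·) is of bounded semivariation on [0,r]. If f : [0,r] → X is continuous, then (P_α*f)(t) = ∫_0^t P_α(t−s)f(s) ds belongs to D(A) for every t ∈ [0,r], and the map t ↦ A((P_α*f)(t)) is continuous on [0,r]. -/

import Mathlib

open MeasureTheory Set

/-- `g β t = t^(β-1)/Γ(β)`. -/
noncomputable def g (β t : ℝ) : ℝ := t ^ (β - 1) / Real.Gamma β

/-- `Pa α S t x = (g_{α-1} * S)(t) x = ∫_0^t g_{α-1}(t-s) S(s) x ds`. -/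
noncomputable def Pa {X : Type*} [NormedAddCommGroup X] [NormedSpace ℂ X]
    (α : ℝ) (S : ℝ → X →L[ℂ] X) (t : ℝ) (x : X) : X :=
  ∫ s in (0:ℝ)..t, g (α - 1) (t - s) • S s x

/-- `G` is of bounded semivariation on `[0, r]`: the quantities
`‖∑ (G(d_{i+1}) - G(d_i)) x_i‖` over all partitions `0 = d_0 < ⋯ < d_n = r`
and all vectors of norm at most one are uniformly bounded. -/
def BoundedSemivariation {X : Type*} [NormedAddCommGroup X] [NormedSpace ℂ X]
    (G : ℝ → X →L[ℂ] X) (r : ℝ) : Prop :=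
  ∃ C : ℝ, ∀ (n : ℕ) (d : ℕ → ℝ) (x : ℕ → X),
    d 0 = 0 → d n = r → (∀ i < n, d i < d (i + 1)) → (∀ i, ‖x i‖ ≤ 1) →
    ‖∑ i ∈ Finset.range n, (G (d (i + 1)) - G (d i)) (x i)‖ ≤ C


lemma g_ii {β : ℝ} (hβ : 0 < β) (a b : ℝ) : IntervalIntegrable (g β) volume a b := by
  unfold g
  exact (intervalIntegral.intervalIntegrable_rpow' (by linarith)).div_const _

lemma g_int {β : ℝ} (hβ : 0 < β) (a : ℝ) : ∫ s in (0:ℝ)..a, g β s = g (β + 1) a := by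
  unfold g
  rw [intervalIntegral.integral_div, integral_rpow (Or.inl (by linarith)), Real.Gamma_add_one hβ.ne',
    Real.zero_rpow (by linarith)]
  have := (Real.Gamma_pos_of_pos hβ).ne'
  have e : β - 1 + 1 = β + 1 - 1 := by ring
  rw [e]
  have e : β + 1 - 1 = β := by ring
  rw [e]
  field_simp
  simp

lemma g_nonneg {β t : ℝ} (hβ : 0 < β) (ht : 0 ≤ t) : 0 ≤ g β t :=
  div_nonneg (Real.rpow_nonneg ht _) (Real.Gamma_pos_of_pos hβ).le

lemma g_mono {β s t : ℝ} (hβ : 1 ≤ β) (hs : 0 ≤ s) (ht : s ≤ t) : g β s ≤ g β t :=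
  div_le_div_of_nonneg_right (Real.rpow_le_rpow hs ht (by linarith))
    (Real.Gamma_pos_of_pos (by linarith)).le

lemma g_cont {β : ℝ} (hβ : 1 ≤ β) : Continuous (g β) := by
  unfold g
  exact (Real.continuous_rpow_const (by linarith)).div_const _

set_option linter.unusedSectionVars false
section
variable {X : Type*} [NormedAddCommGroup X] [NormedSpace ℂ X] [CompleteSpace X]

lemma S_bdd {S : ℝ → X →L[ℂ] X} (hS : ∀ x, Continuous (fun t => S t x)) (R : ℝ) :
    ∃ M, 0 ≤ M ∧ ∀ s, |s| ≤ R → ‖S s‖ ≤ M := by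
  obtain ⟨C, hC⟩ := banach_steinhaus (g := fun s : Icc (-R) R => S s) (by
    intro x
    obtain ⟨C, hC⟩ := (isCompact_Icc (a := -R) (b := R)).exists_bound_of_continuousOn
      (hS x).continuousOn
    exact ⟨C, fun i => hC i i.2⟩)
  refine ⟨max C 0, le_max_right _ _, fun s hs => ?_⟩
  exact (hC ⟨s, abs_le.mp hs⟩).trans (le_max_left _ _)

lemma S_joint {S : ℝ → X →L[ℂ] X} (hS : ∀ x, Continuous (fun t => S t x)) :
    Continuous (fun p : ℝ × X => S p.1 p.2) := by
  rw [continuous_iff_continuousAt]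
  rintro ⟨s0, x0⟩
  obtain ⟨M, hM0, hM⟩ := S_bdd hS (|s0| + 1)
  rw [ContinuousAt, tendsto_iff_norm_sub_tendsto_zero]
  have h1 : Filter.Tendsto (fun p : ℝ × X => M * ‖p.2 - x0‖ + ‖S p.1 x0 - S s0 x0‖)
      (nhds (s0, x0)) (nhds 0) := by
    have : Continuous (fun p : ℝ × X => M * ‖p.2 - x0‖ + ‖S p.1 x0 - S s0 x0‖) := by
      have := (hS x0).comp (continuous_fst (X := ℝ) (Y := X))
      simp only [Function.comp_def] at this
      fun_prop
    have h := this.tendsto (s0, x0)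
    simpa using h
  refine squeeze_zero' (Filter.Eventually.of_forall fun _ => norm_nonneg _) ?_ h1
  have hn : ∀ᶠ p : ℝ × X in nhds (s0, x0), |p.1| < |s0| + 1 := by
    have : Continuous (fun p : ℝ × X => |p.1|) := by fun_prop
    exact this.continuousAt.eventually_lt continuousAt_const (by simp)
  filter_upwards [hn] with p hp
  have : S p.1 p.2 - S s0 x0 = S p.1 (p.2 - x0) + (S p.1 x0 - S s0 x0) := by
    rw [map_sub]; abel
  rw [this]
  refine (norm_add_le _ _).trans ?_
  gcongr
  exact (S p.1).le_of_opNorm_le (hM _ hp.le) _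

lemma J_cont {α : ℝ} (hα1 : 1 < α) {S : ℝ → X →L[ℂ] X} (hS : ∀ x, Continuous (fun t => S t x)) :
    Continuous (fun p : ℝ × X => ∫ u in (0:ℝ)..1, g (α - 1) (1 - u) • S (p.1 * u) p.2) := by
  have hj := S_joint hS
  have hgi : IntervalIntegrable (fun u => g (α - 1) (1 - u)) volume 0 1 := by
    have := (g_ii (β := α - 1) (by linarith) 1 0).comp_sub_left 1
    simpa using this
  rw [continuous_iff_continuousAt]
  rintro ⟨s0, x0⟩
  obtain ⟨M, hM0, hM⟩ := S_bdd hS (|s0| + 1)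
  refine intervalIntegral.continuousAt_of_dominated_interval
    (bound := fun u => g (α - 1) (1 - u) * (M * (‖x0‖ + 1))) ?_ ?_ ?_ ?_
  · refine Filter.Eventually.of_forall fun p => ?_
    have h1 := hgi.aestronglyMeasurable
    rw [← uIoc_of_le zero_le_one] at h1
    exact h1.smul ((hS p.2).comp (continuous_const.mul continuous_id)).aestronglyMeasurable
  · have hn : ∀ᶠ p : ℝ × X in nhds (s0, x0), |p.1| < |s0| + 1 := by
      have : Continuous (fun p : ℝ × X => |p.1|) := by fun_prop
      exact this.continuousAt.eventually_lt continuousAt_const (by simp)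
    have hn2 : ∀ᶠ p : ℝ × X in nhds (s0, x0), ‖p.2‖ < ‖x0‖ + 1 := by
      have : Continuous (fun p : ℝ × X => ‖p.2‖) := by fun_prop
      exact this.continuousAt.eventually_lt continuousAt_const (by simp)
    filter_upwards [hn, hn2] with p hp hp2
    refine Filter.Eventually.of_forall fun u hu => ?_
    rw [uIoc_of_le zero_le_one] at hu
    have hg0 : 0 ≤ g (α - 1) (1 - u) := g_nonneg (by linarith) (by linarith [hu.2])
    rw [norm_smul, Real.norm_of_nonneg hg0]
    gcongr
    refine (S (p.1 * u)).le_of_opNorm_le_of_le (hM _ ?_) hp2.le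
    rw [abs_mul, abs_of_pos hu.1]
    nlinarith [hu.1, hu.2, abs_nonneg p.1]
  · exact hgi.mul_const _
  · refine Filter.Eventually.of_forall fun u _ => ?_
    have : Continuous (fun p : ℝ × X => S (p.1 * u) p.2) :=
      hj.comp ((continuous_fst.mul continuous_const).prodMk continuous_snd)
    exact (this.const_smul _).continuousAt

lemma Pa_eq {α : ℝ} (hα1 : 1 < α) (S : ℝ → X →L[ℂ] X) {t : ℝ} (ht : 0 ≤ t) (x : X) :
    Pa α S t x = t ^ (α - 1) • ∫ u in (0:ℝ)..1, g (α - 1) (1 - u) • S (t * u) x := by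
  unfold Pa
  rcases ht.eq_or_lt with rfl | ht
  · rw [Real.zero_rpow (by linarith)]; simp
  have h := intervalIntegral.smul_integral_comp_mul_left (a := 0) (b := 1)
    (fun s => g (α - 1) (t - s) • S s x) t
  rw [mul_zero, mul_one] at h
  rw [← h]
  have e : t ^ (α - 1) = t * t ^ (α - 2) := by
    rw [show α - 1 = 1 + (α - 2) by ring, Real.rpow_add ht, Real.rpow_one]
  rw [e, mul_smul]
  congr 1
  rw [← intervalIntegral.integral_smul]
  refine intervalIntegral.integral_congr fun u hu => ?_
  rw [uIcc_of_le zero_le_one] at hu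
  change g (α - 1) (t - t * u) • S (t * u) x = t ^ (α - 2) • g (α - 1) (1 - u) • S (t * u) x
  rw [← mul_smul]
  congr 1
  unfold g
  rw [show t - t * u = t * (1 - u) by ring, Real.mul_rpow ht.le (by linarith [hu.2]),
    show α - 1 - 1 = α - 2 by ring]
  ring

lemma Pa_cont {α : ℝ} (hα1 : 1 < α) {S : ℝ → X →L[ℂ] X} (hS : ∀ x, Continuous (fun t => S t x))
    {h : ℝ → X} (hh : Continuous h) : ContinuousOn (fun s => Pa α S s (h s)) (Ici 0) := by
  have h1 : Continuous (fun s => s ^ (α - 1) •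
      ∫ u in (0:ℝ)..1, g (α - 1) (1 - u) • S (s * u) (h s)) :=
    (Real.continuous_rpow_const (by linarith)).smul
      ((J_cont hα1 hS).comp (continuous_id.prodMk hh))
  exact h1.continuousOn.congr fun s hs => Pa_eq hα1 S hs _

lemma gS_ii {β : ℝ} (hβ : 0 < β) {S : ℝ → X →L[ℂ] X} (hS : ∀ x, Continuous (fun t => S t x))
    (t : ℝ) (x : X) : IntervalIntegrable (fun s => g β (t - s) • S s x) volume 0 t := by
  have := (g_ii hβ t 0).comp_sub_left t
  simp only [sub_self, sub_zero] at this
  exact this.smul_continuousOn (hS x).continuousOn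

lemma Pa_sub {α : ℝ} (hα1 : 1 < α) {S : ℝ → X →L[ℂ] X} (hS : ∀ x, Continuous (fun t => S t x))
    (t : ℝ) (x y : X) : Pa α S t (x - y) = Pa α S t x - Pa α S t y := by
  unfold Pa
  rw [← intervalIntegral.integral_sub (gS_ii (by linarith) hS t x) (gS_ii (by linarith) hS t y)]
  simp [smul_sub]

/-- bound for convolution with g -/
lemma conv_bound {β : ℝ} (hβ : 0 < β) {S : ℝ → X →L[ℂ] X} {r M : ℝ}
    (hM0 : 0 ≤ M) (hM : ∀ s, |s| ≤ r → ‖S s‖ ≤ M) {t : ℝ} (ht : t ∈ Icc 0 r) (x : X) :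
    ‖∫ s in (0:ℝ)..t, g β (t - s) • S s x‖ ≤ g (β + 1) r * M * ‖x‖ := by
  have hgi : IntervalIntegrable (fun u => g β (t - u)) volume 0 t := by
    have := (g_ii hβ t 0).comp_sub_left t
    simpa using this
  have h := intervalIntegral.norm_integral_le_of_norm_le (μ := volume)
    (f := fun s => g β (t - s) • S s x)
    (g := fun s => g β (t - s) * (M * ‖x‖)) ht.1 (by
      refine Filter.Eventually.of_forall fun u hu => ?_
      have hg0 : 0 ≤ g β (t - u) := g_nonneg hβ (by linarith [hu.2])
      rw [norm_smul, Real.norm_of_nonneg hg0]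
      gcongr
      refine (S u).le_of_opNorm_le (hM _ ?_) _
      rw [abs_of_pos hu.1]; exact hu.2.trans ht.2) (hgi.mul_const _)
  refine h.trans ?_
  rw [intervalIntegral.integral_mul_const, intervalIntegral.integral_comp_sub_left (g β) t,
    sub_self, sub_zero, g_int hβ, mul_assoc]
  gcongr
  exact g_mono (by linarith) ht.1 ht.2

lemma Pa_int {α : ℝ} (hα1 : 1 < α) (hα2 : α < 2) {S : ℝ → X →L[ℂ] X} (hS : ∀ x, Continuous (fun t => S t x))
    {t : ℝ} (ht : 0 ≤ t) (x : X) :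
    ∫ s in (0:ℝ)..t, Pa α S s x = ∫ s in (0:ℝ)..t, g α (t - s) • S s x := by
  have hα : 0 < α - 1 := by linarith
  let F : ℝ → X := (Ioc 0 t).indicator (fun u => S u x)
  let G : ℝ → ℝ := (Ioc 0 t).indicator (g (α - 1))
  have hF : Integrable F volume := by
    rw [integrable_indicator_iff measurableSet_Ioc]
    exact ((hS x).intervalIntegrable 0 t).1
  have hG : Integrable G volume := by
    rw [integrable_indicator_iff measurableSet_Ioc]
    exact (g_ii hα 0 t).1
  have hI := Integrable.convolution_integrand (μ := volume) (ν := volume)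
    (ContinuousLinearMap.lsmul ℝ ℝ (E := X)).flip hF hG
  have hI2 : Integrable (Function.uncurry fun s u => G (s - u) • F u)
      ((volume.restrict (Ioc 0 t)).prod volume) := by
    have h2 := hI.mono_measure (μ := (volume.restrict (Ioc 0 t)).prod volume)
      (Measure.prod_mono Measure.restrict_le_self le_rfl)
    exact h2
  have hsw := integral_integral_swap hI2
  have hL : ∀ s ∈ Ioc 0 t, ∫ u, G (s - u) • F u = Pa α S s x := by
    intro s hs
    unfold Pa
    rw [intervalIntegral.integral_of_le hs.1.le, ← integral_indicator measurableSet_Ioc]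
    congr 1
    funext u
    by_cases hu : u ∈ Ioc 0 s
    · rw [indicator_of_mem hu]
      have h1 : F u = S u x := indicator_of_mem (show u ∈ Ioc 0 t from ⟨hu.1, hu.2.trans hs.2⟩) _
      rw [h1]
      rcases hu.2.eq_or_lt with rfl | h
      · have : G (u - u) = g (α - 1) (u - u) := by
          rw [sub_self]
          simp only [G, g]
          rw [indicator_of_notMem (by simp), Real.zero_rpow (by linarith), zero_div]
        rw [this]
      · have : G (s - u) = g (α - 1) (s - u) :=
          indicator_of_mem (show s - u ∈ Ioc 0 t from ⟨by linarith, by linarith [hu.1, hs.2]⟩) _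
        rw [this]
    · rw [indicator_of_notMem hu]
      by_cases h0 : 0 < u
      · have : s < u := by
          by_contra h; exact hu ⟨h0, not_lt.mp h⟩
        have : G (s - u) = 0 := indicator_of_notMem (fun h => by linarith [h.1]) _
        rw [this, zero_smul]
      · have : F u = 0 := indicator_of_notMem (fun h => h0 h.1) _
        rw [this, smul_zero]
  have hR : ∀ u, ∫ s in Ioc 0 t, G (s - u) • F u
      = (Ioc 0 t).indicator (fun u => g α (t - u) • S u x) u := by
    intro u
    by_cases hu : u ∈ Ioc 0 t
    · rw [indicator_of_mem hu, integral_smul_const]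
      have h1 : F u = S u x := indicator_of_mem hu _
      rw [h1, ← intervalIntegral.integral_of_le ht,
        intervalIntegral.integral_comp_sub_right G u,
        ← intervalIntegral.integral_add_adjacent_intervals (b := 0)
          hG.intervalIntegrable hG.intervalIntegrable]
      have e1 : ∫ s in (0 - u)..0, G s = 0 := by
        refine (intervalIntegral.integral_congr (g := fun _ => (0:ℝ)) fun s hs => ?_).trans
          intervalIntegral.integral_zero
        rw [uIcc_of_le (by linarith [hu.1])] at hs
        exact indicator_of_notMem (fun h => by linarith [h.1, hs.2]) _
      have e2 : ∫ s in (0:ℝ)..(t - u), G s = g α (t - u) := by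
        rw [show α = (α - 1) + 1 by ring, ← g_int hα]
        refine intervalIntegral.integral_congr_ae (Filter.Eventually.of_forall fun s hs => ?_)
        rw [uIoc_of_le (by linarith [hu.2])] at hs
        have : s ∈ Ioc 0 t := ⟨hs.1, by linarith [hs.2, hu.1]⟩
        simp only [G]
        exact indicator_of_mem this _
      rw [e1, e2, zero_add]
    · rw [indicator_of_notMem hu]
      have : F u = 0 := indicator_of_notMem hu _
      simp [this]
  rw [intervalIntegral.integral_of_le ht, intervalIntegral.integral_of_le ht,
    ← setIntegral_congr_fun measurableSet_Ioc hL, hsw, ← integral_indicator measurableSet_Ioc]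
  exact integral_congr_ae (Filter.Eventually.of_forall hR)
end

section
variable {X : Type*} [NormedAddCommGroup X] [NormedSpace ℂ X] [CompleteSpace X]

lemma mem_integral {K : Submodule ℂ X} (hK : IsClosed (K : Set X)) {φ : ℝ → X} {a b : ℝ}
    (hφ : IntervalIntegrable φ volume a b) (h : ∀ s ∈ uIcc a b, φ s ∈ K) :
    ∫ s in a..b, φ s ∈ K := by
  have : IsClosed (K : Set X) := hK
  have h1 := (K.mkQL).intervalIntegral_comp_comm hφ
  have h2 : ∫ s in a..b, K.mkQL (φ s) = 0 := by
    refine (intervalIntegral.integral_congr (g := fun _ => (0 : X ⧸ K)) fun s hs => ?_).trans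
      intervalIntegral.integral_zero
    exact (Submodule.Quotient.mk_eq_zero K).2 (h s hs)
  rw [h2] at h1
  exact (Submodule.Quotient.mk_eq_zero K).1 h1.symm

lemma graph_Q {α : ℝ} (hα1 : 1 < α)
    (A : X →ₗ.[ℂ] X) (hA_closed : IsClosed (A.graph : Set (X × X)))
    (hA_dense : Dense (A.domain : Set X))
    {S : ℝ → X →L[ℂ] X} (hS : ∀ x, Continuous (fun t => S t x))
    (hS_comm : ∀ t : ℝ, 0 ≤ t → ∀ x y : X, (x, y) ∈ A.graph → (S t x, S t y) ∈ A.graph)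
    (hS_eq : ∀ t : ℝ, 0 ≤ t → ∀ x y : X, (x, y) ∈ A.graph →
      S t x = x + ∫ s in (0:ℝ)..t, g α (t - s) • S s y)
    {t : ℝ} (ht : 0 ≤ t) (x : X) :
    (∫ s in (0:ℝ)..t, g α (t - s) • S s x, S t x - x) ∈ A.graph := by
  obtain ⟨M, hM0, hM⟩ := S_bdd hS t
  have hQ : Continuous (fun x => ∫ s in (0:ℝ)..t, g α (t - s) • S s x) := by
    refine (LipschitzWith.of_dist_le' (K := g (α + 1) t * M) fun x y => ?_).continuous
    rw [dist_eq_norm, dist_eq_norm, ← intervalIntegral.integral_sub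
      (gS_ii (by linarith) hS t x) (gS_ii (by linarith) hS t y)]
    have := conv_bound (β := α) (by linarith) hM0 hM (t := t) ⟨ht, le_rfl⟩ (x - y)
    simpa only [map_sub, smul_sub] using this
  have hcl : IsClosed {x : X | (∫ s in (0:ℝ)..t, g α (t - s) • S s x, S t x - x) ∈ A.graph} :=
    hA_closed.preimage (hQ.prodMk ((S t).continuous.sub continuous_id))
  have hsub : (A.domain : Set X) ⊆
      {x : X | (∫ s in (0:ℝ)..t, g α (t - s) • S s x, S t x - x) ∈ A.graph} := by
    intro x hx
    have hg : (x, A ⟨x, hx⟩) ∈ A.graph := A.mem_graph ⟨x, hx⟩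
    set y := A ⟨x, hx⟩
    have e := hS_eq t ht x y hg
    have i1 := gS_ii (β := α) (by linarith) hS t x
    have i2 := gS_ii (β := α) (by linarith) hS t y
    have e2 : S t x - x = ∫ s in (0:ℝ)..t, g α (t - s) • S s y := by
      rw [e]; abel
    have hc : Continuous (fun s => (g α (t - s) • S s x, g α (t - s) • S s y)) := by
      have h1 := hS x
      have h2 := hS y
      have h3 : Continuous (fun s => g α (t - s)) :=
        (g_cont hα1.le).comp (continuous_const.sub continuous_id)
      exact (h3.smul h1).prodMk (h3.smul h2)
    have hm : ∫ s in (0:ℝ)..t, (g α (t - s) • S s x, g α (t - s) • S s y) ∈ A.graph := by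
      refine mem_integral hA_closed (hc.intervalIntegrable _ _) fun s hs => ?_
      rw [uIcc_of_le ht] at hs
      have := A.graph.smul_mem ((g α (t - s) : ℝ) : ℂ) (hS_comm s hs.1 x y hg)
      simpa only [Prod.smul_mk, Complex.coe_smul] using this
    have h1 := (ContinuousLinearMap.fst ℂ X X).intervalIntegral_comp_comm
      (hc.intervalIntegrable (μ := volume) 0 t)
    have h2 := (ContinuousLinearMap.snd ℂ X X).intervalIntegral_comp_comm
      (hc.intervalIntegrable (μ := volume) 0 t)
    simp only [ContinuousLinearMap.coe_fst', ContinuousLinearMap.coe_snd'] at h1 h2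
    change (_, _) ∈ A.graph
    rw [e2, h1, h2]
    exact hm
  have := hcl.closure_subset_iff.2 hsub
  rw [hA_dense.closure_eq] at this
  exact this (mem_univ x)

lemma bsv {S : ℝ → X →L[ℂ] X} {r : ℝ} (h : BoundedSemivariation S r) :
    ∃ C, 0 ≤ C ∧ ∀ t ∈ Icc 0 r, ∀ n : ℕ, 0 < n → ∀ z : ℕ → X, ∀ ε > 0, (∀ i < n, ‖z i‖ ≤ ε) →
      ‖∑ i ∈ Finset.range n, (S (t * ((i + 1 : ℕ) : ℝ) / n) - S (t * (i : ℝ) / n)) (z i)‖ ≤ C * ε := by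
  obtain ⟨C, hC⟩ := h
  refine ⟨max C 0, le_max_right _ _, fun t ht n hn z ε hε hz => ?_⟩
  have hn' : (0:ℝ) < n := by exact_mod_cast hn
  rcases ht.1.eq_or_lt with rfl | ht0
  · simp only [zero_mul, zero_div, sub_self, zero_apply, Finset.sum_const_zero,
      norm_zero]
    positivity
  let x : ℕ → X := fun i => if i < n then ((ε : ℂ)⁻¹) • z i else 0
  have hx : ∀ i, ‖x i‖ ≤ 1 := by
    intro i
    simp only [x]
    split_ifs with hi
    · rw [norm_smul, norm_inv, Complex.norm_real, Real.norm_of_nonneg hε.le]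
      rw [inv_mul_le_iff₀ hε, mul_one]
      exact hz i hi
    · simp
  have hstep : ∀ i : ℕ, t * (i : ℝ) / n < t * ((i + 1 : ℕ) : ℝ) / n := by
    intro i
    push_cast
    gcongr
    linarith
  have key : ‖∑ i ∈ Finset.range n,
      (S (t * ((i + 1 : ℕ) : ℝ) / n) - S (t * (i : ℝ) / n)) (x i)‖ ≤ C := by
    rcases ht.2.eq_or_lt with rfl | htr
    · refine hC n (fun i => t * (i : ℝ) / n) x (by simp) (by field_simp) (fun i _ => hstep i) hx
    · have := hC (n + 1) (fun i => if i ≤ n then t * (i : ℝ) / n else r) x (by simp) (by simp)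
        (by
          intro i hi
          have hi' : i ≤ n := by omega
          simp only [hi', if_true]
          split_ifs with h1
          · exact hstep i
          · have : i = n := by omega
            subst this
            rw [mul_div_assoc, div_self hn'.ne', mul_one]; exact htr) hx
      rw [Finset.sum_range_succ] at this
      have hxn : x n = 0 := by simp [x]
      rw [hxn, map_zero, add_zero] at this
      convert this using 2
      refine Finset.sum_congr rfl fun i hi => ?_
      have hi := Finset.mem_range.1 hi
      rw [if_pos (show i + 1 ≤ n by omega), if_pos hi.le]
  have e : ∑ i ∈ Finset.range n, (S (t * ((i + 1 : ℕ) : ℝ) / n) - S (t * (i : ℝ) / n)) (z i)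
      = (ε : ℂ) • ∑ i ∈ Finset.range n,
        (S (t * ((i + 1 : ℕ) : ℝ) / n) - S (t * (i : ℝ) / n)) (x i) := by
    rw [Finset.smul_sum]
    refine Finset.sum_congr rfl fun i hi => ?_
    have hi := Finset.mem_range.1 hi
    have : z i = (ε : ℂ) • x i := by
      simp only [x, if_pos hi]
      rw [smul_inv_smul₀ (by exact_mod_cast hε.ne')]
    rw [this, map_smul]
  rw [e, norm_smul, Complex.norm_real, Real.norm_of_nonneg hε.le, mul_comm]
  gcongr
  exact key.trans (le_max_left _ _)

lemma sum_refine (T : ℕ → X →L[ℂ] X) (z : ℕ → X) (n m : ℕ) (hm : 0 < m) :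
    ∑ j ∈ Finset.range (n * m), (T (j + 1) - T j) (z (j / m))
      = ∑ i ∈ Finset.range n, (T ((i + 1) * m) - T (i * m)) (z i) := by
  induction n with
  | zero => simp
  | succ n ih =>
    rw [Nat.succ_mul, Finset.sum_range_add, ih, Finset.sum_range_succ]
    congr 1
    have : ∀ k ∈ Finset.range m, (T (n * m + k + 1) - T (n * m + k)) (z ((n * m + k) / m))
        = (fun k => T (n * m + k) (z n)) (k + 1) - (fun k => T (n * m + k) (z n)) k := by
      intro k hk
      have hk := Finset.mem_range.1 hk
      have : (n * m + k) / m = n := by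
        rw [mul_comm, Nat.mul_add_div hm, Nat.div_eq_of_lt hk, add_zero]
      rw [this]; rfl
    rw [Finset.sum_congr rfl this, Finset.sum_range_sub (fun k => T (n * m + k) (z n)) m]
    simp [Nat.succ_mul]

noncomputable def Wn (S : ℝ → X →L[ℂ] X) (f : ℝ → X) (n : ℕ) (t : ℝ) : X :=
  ∑ i ∈ Finset.range n, (S (t * ((i + 1 : ℕ) : ℝ) / n) - S (t * (i : ℝ) / n)) (f (t - t * i / n))

lemma pt_mem {t r : ℝ} (ht : t ∈ Icc 0 r) {i n : ℕ} (hn : 0 < n) (hi : i ≤ n) :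
    t * (i : ℝ) / n ∈ Icc 0 t := by
  have hn' : (0:ℝ) < n := by exact_mod_cast hn
  have hi' : (i:ℝ) ≤ n := by exact_mod_cast hi
  have h0 := ht.1
  refine ⟨by positivity, ?_⟩
  rw [div_le_iff₀ hn']
  gcongr

lemma Wn_cmp {S : ℝ → X →L[ℂ] X} {f : ℝ → X} {r C : ℝ}
    (hC : ∀ t ∈ Icc 0 r, ∀ n : ℕ, 0 < n → ∀ z : ℕ → X, ∀ ε > 0, (∀ i < n, ‖z i‖ ≤ ε) →
      ‖∑ i ∈ Finset.range n, (S (t * ((i + 1 : ℕ) : ℝ) / n) - S (t * (i : ℝ) / n)) (z i)‖ ≤ C * ε)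
    {n m : ℕ} (hn : 0 < n) (hm : 0 < m) {ε : ℝ} (hε : 0 < ε)
    (hosc : ∀ a ∈ Icc 0 r, ∀ b ∈ Icc 0 r, |a - b| ≤ r / n → ‖f a - f b‖ ≤ ε)
    {t : ℝ} (ht : t ∈ Icc 0 r) : ‖Wn S f n t - Wn S f (n * m) t‖ ≤ C * ε := by
  have hn' : (0:ℝ) < n := by exact_mod_cast hn
  have hm' : (0:ℝ) < m := by exact_mod_cast hm
  have e1 : Wn S f n t = ∑ j ∈ Finset.range (n * m),
      (S (t * ((j + 1 : ℕ) : ℝ) / (n * m : ℕ)) - S (t * (j : ℝ) / (n * m : ℕ)))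
        (f (t - t * ((j / m : ℕ) : ℝ) / n)) := by
    rw [sum_refine (fun j => S (t * (j : ℝ) / (n * m : ℕ)))
      (fun i => f (t - t * (i : ℝ) / n)) n m hm]
    unfold Wn
    refine Finset.sum_congr rfl fun i _ => ?_
    have a1 : t * ((i + 1 : ℕ) : ℝ) / n = t * (((i + 1) * m : ℕ) : ℝ) / (n * m : ℕ) := by
      push_cast; field_simp
    have a2 : t * (i : ℝ) / n = t * ((i * m : ℕ) : ℝ) / (n * m : ℕ) := by
      push_cast; field_simp
    rw [a1, ← a2]
  rw [e1]
  unfold Wn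
  rw [← Finset.sum_sub_distrib]
  simp only [← map_sub]
  have hnm : 0 < n * m := Nat.mul_pos hn hm
  refine hC t ht (n * m) hnm
    (fun j => f (t - t * ((j / m : ℕ) : ℝ) / n) - f (t - t * (j : ℝ) / (n * m : ℕ))) ε hε
    fun j hj => ?_
  have q1 := pt_mem ht (i := j / m) hn ((Nat.div_lt_of_lt_mul (by rwa [mul_comm] at hj)).le)
  have q2 := pt_mem ht hnm hj.le
  refine hosc _ ⟨by linarith [q1.2], by linarith [q1.1, ht.2]⟩ _
    ⟨by linarith [q2.2], by linarith [q2.1, ht.2]⟩ ?_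
  have f1 : ((j / m : ℕ) : ℝ) * m ≤ j := by exact_mod_cast Nat.div_mul_le_self j m
  have f2 : (j : ℝ) ≤ m * (((j / m : ℕ) : ℝ) + 1) := by
    exact_mod_cast (Nat.lt_mul_div_succ j hm).le
  have e3 : t - t * ((j / m : ℕ) : ℝ) / n - (t - t * (j : ℝ) / (n * m : ℕ))
      = t / n * ((j : ℝ) / m - ((j / m : ℕ) : ℝ)) := by
    push_cast; field_simp; ring
  have g1 : 0 ≤ (j : ℝ) / m - ((j / m : ℕ) : ℝ) := by
    rw [sub_nonneg, le_div_iff₀ hm']; exact f1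
  have g2 : (j : ℝ) / m - ((j / m : ℕ) : ℝ) ≤ 1 := by
    rw [sub_le_iff_le_add, div_le_iff₀ hm']; linarith
  rw [e3, abs_of_nonneg (mul_nonneg (div_nonneg ht.1 hn'.le) g1)]
  calc t / n * ((j : ℝ) / m - ((j / m : ℕ) : ℝ)) ≤ t / n * 1 := by
        have := ht.1
        gcongr
    _ ≤ r / n := by rw [mul_one]; have := ht.2; gcongr

lemma core {α : ℝ} (hα1 : 1 < α) (hα2 : α < 2)
    (A : X →ₗ.[ℂ] X) (hA_closed : IsClosed (A.graph : Set (X × X)))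
    (hA_dense : Dense (A.domain : Set X))
    {S : ℝ → X →L[ℂ] X} (hS : ∀ x, Continuous (fun t => S t x))
    (hS_comm : ∀ t : ℝ, 0 ≤ t → ∀ x y : X, (x, y) ∈ A.graph → (S t x, S t y) ∈ A.graph)
    (hS_eq : ∀ t : ℝ, 0 ≤ t → ∀ x y : X, (x, y) ∈ A.graph →
      S t x = x + ∫ s in (0:ℝ)..t, g α (t - s) • S s y)
    {r : ℝ} (hr : 0 < r) (hsv : BoundedSemivariation S r)
    {f : ℝ → X} (hf : Continuous f) :
    ∃ w : ℝ → X, ContinuousOn w (Icc 0 r) ∧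
      ∀ t ∈ Icc (0:ℝ) r,
        ((∫ s in (0:ℝ)..t, Pa α S s (f (t - s))), w t) ∈ A.graph := by
  obtain ⟨C, hC0, hC⟩ := bsv hsv
  -- oscillation
  have hosc : ∀ ε > 0, ∃ N : ℕ, 0 < N ∧ ∀ n ≥ N,
      ∀ a ∈ Icc 0 r, ∀ b ∈ Icc 0 r, |a - b| ≤ r / n → ‖f a - f b‖ ≤ ε := by
    intro ε hε
    have hu := isCompact_Icc.uniformContinuousOn_of_continuous (hf.continuousOn (s := Icc 0 r))
    obtain ⟨δ, hδ, h⟩ := Metric.uniformContinuousOn_iff.1 hu ε hε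
    obtain ⟨N, hN⟩ := exists_nat_gt (r / δ)
    have hN0 : (0:ℝ) < N := (div_pos hr hδ).trans hN
    refine ⟨N, by exact_mod_cast hN0, fun n hn a ha b hb hab => ?_⟩
    have hn' : (N:ℝ) ≤ n := by exact_mod_cast hn
    rw [← dist_eq_norm]
    refine (h a ha b hb ?_).le
    rw [Real.dist_eq]
    refine hab.trans_lt ?_
    rw [div_lt_iff₀ (hN0.trans_le hn')]
    rw [div_lt_iff₀ hδ] at hN
    nlinarith
  have hUC : UniformCauchySeqOn (Wn S f) Filter.atTop (Icc 0 r) := by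
    rw [Metric.uniformCauchySeqOn_iff]
    intro ε hε
    obtain ⟨N, hN0, hN⟩ := hosc (ε / (2 * C + 1) / 2) (by positivity)
    refine ⟨N, fun m hm n hn t ht => ?_⟩
    have h1 := Wn_cmp hC (hN0.trans_le hm) (hN0.trans_le hn) (by positivity) (hN m hm) ht
    have h2 := Wn_cmp hC (hN0.trans_le hn) (hN0.trans_le hm) (by positivity) (hN n hn) ht
    rw [mul_comm n m] at h2
    rw [dist_eq_norm]
    have e : Wn S f m t - Wn S f n t = (Wn S f m t - Wn S f (m * n) t)
      - (Wn S f n t - Wn S f (m * n) t) := by abel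
    rw [e]
    refine (norm_sub_le _ _).trans_lt ?_
    refine (add_le_add h1 h2).trans_lt ?_
    have : C * (ε / (2 * C + 1) / 2) + C * (ε / (2 * C + 1) / 2) = ε * (C / (2 * C + 1)) := by
      field_simp; ring
    rw [this]
    have : C / (2 * C + 1) < 1 := by rw [div_lt_one (by positivity)]; linarith
    nlinarith
  have hlim : ∀ t ∈ Icc 0 r, ∃ y, Filter.Tendsto (fun n => Wn S f n t) Filter.atTop (nhds y) :=
    fun t ht => cauchySeq_tendsto_of_complete (hUC.cauchySeq ht)
  choose! w hw using hlim
  have hTU := hUC.tendstoUniformlyOn_of_tendsto hw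
  have hj := S_joint hS
  refine ⟨w, hTU.continuousOn (Filter.Frequently.of_forall fun n => ?_), fun t ht => ?_⟩
  · refine Continuous.continuousOn ?_
    unfold Wn
    refine continuous_finsetSum _ fun i _ => ?_
    have c0 : Continuous (fun t : ℝ => f (t - t * i / n)) := by fun_prop
    have c1 : Continuous (fun t : ℝ => S (t * ((i + 1 : ℕ) : ℝ) / n) (f (t - t * i / n))) :=
      hj.comp (Continuous.prodMk (by fun_prop) c0)
    have c2 : Continuous (fun t : ℝ => S (t * (i : ℝ) / n) (f (t - t * i / n))) :=
      hj.comp (Continuous.prodMk (by fun_prop) c0)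
    exact c1.sub c2
  · let V : ℕ → X := fun n => ∑ i ∈ Finset.range n,
      ((∫ s in (0:ℝ)..(t * ((i + 1 : ℕ) : ℝ) / n), Pa α S s (f (t - t * i / n)))
        - ∫ s in (0:ℝ)..(t * (i : ℝ) / n), Pa α S s (f (t - t * i / n)))
    have hVW : ∀ n, (V n, Wn S f n t) ∈ A.graph := by
      intro n
      have : (V n, Wn S f n t) = ∑ i ∈ Finset.range n,
        ((∫ s in (0:ℝ)..(t * ((i + 1 : ℕ) : ℝ) / n), Pa α S s (f (t - t * i / n)),
            S (t * ((i + 1 : ℕ) : ℝ) / n) (f (t - t * i / n)) - f (t - t * i / n))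
        - (∫ s in (0:ℝ)..(t * (i : ℝ) / n), Pa α S s (f (t - t * i / n)),
            S (t * (i : ℝ) / n) (f (t - t * i / n)) - f (t - t * i / n))) := by
        refine Prod.ext ?_ ?_
        · rw [Prod.fst_sum]; rfl
        · rw [Prod.snd_sum]
          change (∑ i ∈ Finset.range n, _ : X) = _
          refine Finset.sum_congr rfl fun i _ => ?_
          simp
      rw [this]
      have ht0 := ht.1
      refine A.graph.sum_mem fun i _ => A.graph.sub_mem ?_ ?_
      · rw [Pa_int hα1 hα2 hS (by positivity)]
        exact graph_Q hα1 A hA_closed hA_dense hS hS_comm hS_eq (by positivity) _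
      · rw [Pa_int hα1 hα2 hS (by positivity)]
        exact graph_Q hα1 A hA_closed hA_dense hS hS_comm hS_eq (by positivity) _
    have hV : Filter.Tendsto V Filter.atTop (nhds (∫ s in (0:ℝ)..t, Pa α S s (f (t - s)))) := by
      obtain ⟨M, hM0, hM⟩ := S_bdd hS r
      set K := g (α - 1 + 1) r * M with hKdef
      have hK0 : 0 ≤ K := mul_nonneg (g_nonneg (by linarith) hr.le) hM0
      have hK : ∀ s ∈ Icc 0 r, ∀ x, ‖Pa α S s x‖ ≤ K * ‖x‖ := fun s hs x =>
        conv_bound (by linarith) hM0 hM hs x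
      rw [Metric.tendsto_atTop]
      intro ε hε
      obtain ⟨N, hN0, hN⟩ := hosc (ε / (K * r + 1)) (by positivity)
      refine ⟨N, fun n hn => ?_⟩
      have hn0 : 0 < n := hN0.trans_le hn
      have hn' : (0:ℝ) < n := by exact_mod_cast hn0
      have iic : ∀ h : ℝ → X, Continuous h → ∀ a b, 0 ≤ a → 0 ≤ b →
          IntervalIntegrable (fun s => Pa α S s (h s)) volume a b := by
        intro h hh a b ha hb
        refine ((Pa_cont hα1 hS hh).mono ?_).intervalIntegrable
        intro s hs
        exact (le_min ha hb).trans hs.1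
      have ht0 := ht.1
      have hfc : Continuous (fun s => f (t - s)) := by fun_prop
      have e1 := intervalIntegral.sum_integral_adjacent_intervals (μ := volume)
        (f := fun s => Pa α S s (f (t - s))) (a := fun i : ℕ => t * (i : ℝ) / n) (n := n)
        (fun k _ => iic _ hfc _ _ (by positivity) (by positivity))
      have e2 : t * ((n : ℕ) : ℝ) / n = t := by field_simp
      simp only [e2, Nat.cast_zero, mul_zero, zero_div] at e1
      rw [dist_eq_norm, ← e1, ← Finset.sum_sub_distrib]
      have hterm : ∀ i ∈ Finset.range n,
          ‖((∫ s in (0:ℝ)..(t * ((i + 1 : ℕ) : ℝ) / n), Pa α S s (f (t - t * i / n)))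
            - ∫ s in (0:ℝ)..(t * (i : ℝ) / n), Pa α S s (f (t - t * i / n)))
            - ∫ s in (t * (i : ℝ) / n)..(t * ((i + 1 : ℕ) : ℝ) / n), Pa α S s (f (t - s))‖
          ≤ K * (ε / (K * r + 1)) * (t / n) := by
        intro i hi
        have hi := Finset.mem_range.1 hi
        have q1 := pt_mem ht hn0 hi.le
        have q2 := pt_mem ht (i := i + 1) hn0 hi
        have e4 : t * ((i + 1 : ℕ) : ℝ) / n - t * (i : ℝ) / n = t / n := by
          push_cast; field_simp; ring
        have hle : t * (i : ℝ) / n ≤ t * ((i + 1 : ℕ) : ℝ) / n := by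
          have : 0 ≤ t / n := by positivity
          linarith
        rw [intervalIntegral.integral_interval_sub_left
          (iic _ continuous_const _ _ le_rfl q2.1) (iic _ continuous_const _ _ le_rfl q1.1),
          ← intervalIntegral.integral_sub (iic _ continuous_const _ _ q1.1 q2.1)
            (iic _ hfc _ _ q1.1 q2.1)]
        have := intervalIntegral.norm_integral_le_of_norm_le_const
          (a := t * (i : ℝ) / n) (b := t * ((i + 1 : ℕ) : ℝ) / n)
          (f := fun s => Pa α S s (f (t - t * i / n)) - Pa α S s (f (t - s)))
          (C := K * (ε / (K * r + 1))) (by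
            intro s hs
            rw [uIoc_of_le hle] at hs
            rw [← Pa_sub hα1 hS]
            have hs0 : 0 ≤ s := q1.1.trans hs.1.le
            have hst : s ≤ t := hs.2.trans q2.2
            refine (hK s ⟨hs0, hst.trans ht.2⟩ _).trans ?_
            gcongr
            refine hN n hn _ ⟨by linarith [q1.2], by linarith [q1.1, ht.2]⟩ _
              ⟨by linarith, by linarith [ht.2]⟩ ?_
            have : t / n ≤ r / n := by have := ht.2; gcongr
            rw [abs_of_nonneg (by linarith [hs.1])]
            linarith [hs.2])
        rwa [e4, abs_of_nonneg (by positivity)] at this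
      refine (norm_sum_le_of_le _ hterm).trans_lt ?_
      rw [Finset.sum_const, Finset.card_range, nsmul_eq_mul]
      have e5 : (n:ℝ) * (K * (ε / (K * r + 1)) * (t / n)) = ε * (K * t / (K * r + 1)) := by
        have : K * r + 1 ≠ 0 := by positivity
        field_simp
      rw [e5]
      have : K * t / (K * r + 1) < 1 := by
        rw [div_lt_one (by positivity)]
        nlinarith [ht.2]
      nlinarith
    exact hA_closed.mem_of_tendsto (hV.prodMk_nhds (hw t ht)) (Filter.Eventually.of_forall hVW)
end

theorem stmt_6
    {X : Type*} [NormedAddCommGroup X] [NormedSpace ℂ X] [CompleteSpace X]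
    (α : ℝ) (hα1 : 1 < α) (hα2 : α < 2)
    (A : X →ₗ.[ℂ] X) (hA_closed : IsClosed (A.graph : Set (X × X)))
    (hA_dense : Dense (A.domain : Set X))
    (S : ℝ → X →L[ℂ] X)
    (hS_cont : ∀ x : X, ContinuousOn (fun t => S t x) (Ici (0:ℝ)))
    (hS_zero : S 0 = 1)
    (hS_dom : ∀ t : ℝ, 0 ≤ t → ∀ x ∈ A.domain, S t x ∈ A.domain)
    (hS_comm : ∀ t : ℝ, 0 ≤ t → ∀ x y : X, (x, y) ∈ A.graph → (S t x, S t y) ∈ A.graph)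
    (hS_eq : ∀ t : ℝ, 0 ≤ t → ∀ x y : X, (x, y) ∈ A.graph →
      S t x = x + ∫ s in (0:ℝ)..t, g α (t - s) • S s y)
    (r : ℝ) (hr : 0 < r) (hsv : BoundedSemivariation S r)
    (f : ℝ → X) (hf : ContinuousOn f (Icc 0 r)) :
    ∃ w : ℝ → X, ContinuousOn w (Icc 0 r) ∧
      ∀ t ∈ Icc (0:ℝ) r,
        ((∫ s in (0:ℝ)..t, Pa α S (t - s) (f s)), w t) ∈ A.graph := by
  let S' : ℝ → X →L[ℂ] X := fun t => S (max t 0)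
  have hSS : ∀ t, 0 ≤ t → S' t = S t := fun t ht => by simp only [S', max_eq_left ht]
  have hS' : ∀ x, Continuous (fun t => S' t x) := fun x =>
    (hS_cont x).comp_continuous (continuous_id.max continuous_const) (fun t => mem_Ici.2 (le_max_right _ _))
  let f' : ℝ → X := IccExtend hr.le ((Icc 0 r).restrict f)
  have hf' : Continuous f' := (continuousOn_iff_continuous_restrict.1 hf).Icc_extend'
  have hff : ∀ t ∈ Icc 0 r, f' t = f t := fun t ht => IccExtend_of_mem hr.le _ ht
  have hint : ∀ β t x, 0 ≤ t → ∫ s in (0:ℝ)..t, g β (t - s) • S' s x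
      = ∫ s in (0:ℝ)..t, g β (t - s) • S s x := by
    intro β t x ht
    refine intervalIntegral.integral_congr fun s hs => ?_
    rw [uIcc_of_le ht] at hs
    simp only [hSS s hs.1]
  have hbs : BoundedSemivariation S' r := by
    obtain ⟨C, hC⟩ := hsv
    refine ⟨C, fun n d x h0 hn hd hx => ?_⟩
    have hpos : ∀ i, i ≤ n → 0 ≤ d i := by
      intro i
      induction i with
      | zero => intro _; rw [h0]
      | succ i ih => intro hi; exact (ih (by omega)).trans (hd i (by omega)).le
    convert hC n d x h0 hn hd hx using 2
    refine Finset.sum_congr rfl fun i hi => ?_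
    have hi := Finset.mem_range.1 hi
    rw [hSS _ (hpos _ hi), hSS _ (hpos _ hi.le)]
  obtain ⟨w, hw, h⟩ := core hα1 hα2 A hA_closed hA_dense hS'
    (fun t ht x y hxy => by rw [hSS t ht]; exact hS_comm t ht x y hxy)
    (fun t ht x y hxy => by rw [hSS t ht, hint α t y ht]; exact hS_eq t ht x y hxy) hr hbs hf'
  refine ⟨w, hw, fun t ht => ?_⟩
  have e : ∫ s in (0:ℝ)..t, Pa α S (t - s) (f s) = ∫ s in (0:ℝ)..t, Pa α S' s (f' (t - s)) := by
    have h1 := intervalIntegral.integral_comp_sub_left (a := 0) (b := t)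
      (fun s => Pa α S' s (f' (t - s))) t
    rw [sub_self, sub_zero] at h1
    rw [← h1]
    refine intervalIntegral.integral_congr fun s hs => ?_
    rw [uIcc_of_le ht.1] at hs
    have e1 : f' (t - (t - s)) = f s := by
      rw [sub_sub_cancel]; exact hff s ⟨hs.1, hs.2.trans ht.2⟩
    change Pa α S (t - s) (f s) = Pa α S' (t - s) (f' (t - (t - s)))
    rw [e1]
    exact (hint (α - 1) (t - s) (f s) (by linarith [hs.2])).symm
  rw [e]
  exact h t ht
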